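/- Let u ≥ 3 be an integer and q = u−1. Then Σ_{a+b=u, a≥2, b≥1} ζ(a,2,b) = ζ(u,2) + ζ(3,q) − ζ(2,q,1). -/

import Mathlib

/-- The multiple zeta value `ζ(s₁,…,s_d) = Σ_{k₁>⋯>k_d≥1} 1/(k₁^{s₁}⋯k_d^{s_d})`. -/
noncomputable def mzv {d : ℕ} (s : Fin d → ℕ) : ℝ :=
  ∑' k : {k : Fin d → ℕ // StrictAnti k ∧ ∀ i, 0 < k i},
    ∏ i, (1 : ℝ) / (k.1 i : ℝ) ^ s i


open scoped ENNReal
noncomputable section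

def hh (n : ℕ) : ℝ := ∑ j ∈ Finset.range n, 1 / ((j : ℝ) + 1)

lemma hh_succ (n : ℕ) : hh (n + 1) = hh n + 1 / ((n : ℝ) + 1) := by
  simp [hh, Finset.sum_range_succ]

lemma hh_mono : Monotone hh := by
  apply monotone_nat_of_le_succ
  intro n
  rw [hh_succ]
  have : (0 : ℝ) ≤ 1 / ((n : ℝ) + 1) := by positivity
  linarith

lemma hh_nonneg (n : ℕ) : 0 ≤ hh n := by
  unfold hh; positivity

/-- one telescoping step -/
lemma tele_step (c : ℕ) (hc : 0 < c) :
    ∑' t : ℕ, ENNReal.ofReal (1 / ((c : ℝ) + t) - 1 / ((c : ℝ) + t + 1)) = ENNReal.ofReal (1 / (c : ℝ)) := by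
  have hc' : (0 : ℝ) < c := by exact_mod_cast hc
  have hnn : ∀ t : ℕ, 0 ≤ 1 / ((c : ℝ) + t) - 1 / ((c : ℝ) + t + 1) := by
    intro t
    rw [sub_nonneg]
    apply one_div_le_one_div_of_le <;> [positivity; linarith]
  have hs : HasSum (fun t : ℕ => 1 / ((c : ℝ) + t) - 1 / ((c : ℝ) + t + 1)) (1 / (c : ℝ)) := by
    rw [hasSum_iff_tendsto_nat_of_nonneg hnn]
    have h1 : ∀ N : ℕ, ∑ t ∈ Finset.range N, (1 / ((c : ℝ) + t) - 1 / ((c : ℝ) + t + 1))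
        = 1 / (c : ℝ) - 1 / ((c : ℝ) + N) := by
      intro N
      induction N with
      | zero => simp
      | succ N ih => rw [Finset.sum_range_succ, ih]; push_cast; ring
    simp_rw [h1]
    have : Filter.Tendsto (fun N : ℕ => 1 / ((c : ℝ) + N)) Filter.atTop (nhds 0) := by
      simp only [one_div]
      exact (Filter.tendsto_atTop_add_const_left _ _ tendsto_natCast_atTop_atTop).inv_tendsto_atTop
    simpa using this.const_sub (1 / (c : ℝ))
  rw [← hs.tsum_eq, ENNReal.ofReal_tsum_of_nonneg hnn hs.summable]

lemma tsum_shift (n : ℕ) (f : ℕ → ℝ≥0∞) :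
    ∑' k, (if n < k then f k else 0) = ∑' t : ℕ, f (n + 1 + t) := by
  rw [← Summable.sum_add_tsum_nat_add' (k := n + 1) ENNReal.summable]
  rw [Finset.sum_eq_zero, zero_add]
  · apply tsum_congr
    intro t
    rw [if_pos (by omega), add_comm]
  · intro k hk
    rw [if_neg]
    simp at hk; omega

lemma tele (n i : ℕ) (hi : i ≤ n) :
    ∑' k : ℕ, (if n < k then ENNReal.ofReal (1 / ((k : ℝ) - i) - 1 / (k : ℝ)) else 0)
      = ENNReal.ofReal (hh n - hh (n - i)) := by
  induction i with
  | zero => simp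
  | succ i ih =>
    have e1 : hh n - hh (n - (i + 1)) = (hh n - hh (n - i)) + 1 / ((n - i : ℕ) : ℝ) := by
      obtain ⟨d, rfl⟩ : ∃ d, n = d + 1 + i := ⟨n - (i + 1), by omega⟩
      rw [show d + 1 + i - (i + 1) = d by omega, show d + 1 + i - i = d + 1 by omega, hh_succ]
      push_cast; ring
    rw [e1, ENNReal.ofReal_add (sub_nonneg.2 (hh_mono (by omega))) (by positivity), ← ih (by omega),
      ← tele_step (n - i) (by omega), tsum_shift, tsum_shift,
      ← ENNReal.tsum_add]
    apply tsum_congr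
    intro t
    obtain ⟨d, rfl⟩ : ∃ d, n = d + 1 + i := ⟨n - (i + 1), by omega⟩
    rw [show d + 1 + i - i = d + 1 by omega, ← ENNReal.ofReal_add]
    · congr 1
      push_cast
      ring
    · rw [sub_nonneg]
      apply one_div_le_one_div_of_le
      · push_cast
        have : (0 : ℝ) < (d : ℝ) + 1 + 1 + t := by positivity
        linarith
      · linarith [(Nat.cast_nonneg i : (0 : ℝ) ≤ i)]
    · rw [sub_nonneg]
      apply one_div_le_one_div_of_le
      · positivity
      · linarith

lemma tsum_Ico (n : ℕ) (f : ℕ → ℝ) (hf : ∀ j, 0 < j → j < n → 0 ≤ f j) :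
    ∑' j : ℕ, (if 0 < j ∧ j < n then ENNReal.ofReal (f j) else 0)
      = ENNReal.ofReal (∑ j ∈ Finset.Ico 1 n, f j) := by
  rw [tsum_eq_sum (s := Finset.Ico 1 n)]
  · rw [ENNReal.ofReal_sum_of_nonneg]
    · apply Finset.sum_congr rfl
      intro j hj
      rw [if_pos]
      simp at hj; omega
    · intro j hj
      simp at hj
      exact hf j (by omega) (by omega)
  · intro j hj
    rw [if_neg]
    simp at hj; omega

lemma sum_inv (n : ℕ) : ∑ j ∈ Finset.Ico 1 n, 1 / (j : ℝ) = hh (n - 1) := by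
  rw [Finset.sum_Ico_eq_sum_range]
  unfold hh
  apply Finset.sum_congr rfl
  intro j _
  push_cast; ring

lemma sum_inv_sub (k n : ℕ) (hn : 0 < n) (h : n ≤ k) :
    ∑ j ∈ Finset.Ico 1 n, 1 / ((k : ℝ) - j) = hh (k - 1) - hh (k - n) := by
  induction n, hn using Nat.le_induction with
  | base => simp
  | succ n hn ih =>
    rw [Finset.sum_Ico_succ_top hn, ih (by omega)]
    obtain ⟨d, rfl⟩ : ∃ d, k = d + 1 + n := ⟨k - (n + 1), by omega⟩
    rw [show d + 1 + n - n = d + 1 by omega, show d + 1 + n - (n + 1) = d by omega, hh_succ]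
    push_cast
    ring

/-- finite identity -/
lemma fin_id (m n : ℕ) (hm : 0 < m) (h : m < n) :
    hh n - hh (n - m) + hh (m - 1) = 1 / (n : ℝ) + ∑ i ∈ Finset.Ico 1 m, (n : ℝ) / (i * (n - i)) := by
  have h1 := sum_inv_sub n m hm h.le
  have h2 := sum_inv m
  have h3 : ∑ i ∈ Finset.Ico 1 m, (n : ℝ) / (i * (n - i)) =
     ∑ j ∈ Finset.Ico 1 m, 1 / ((n : ℝ) - j) + ∑ j ∈ Finset.Ico 1 m, 1 / (j : ℝ) := by
    rw [← Finset.sum_add_distrib]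
    apply Finset.sum_congr rfl
    intro i hi
    simp at hi
    have : (0 : ℝ) < i := by exact_mod_cast (by omega : 0 < i)
    have h5 : (0 : ℝ) < n - i := by
      rw [sub_pos]; exact_mod_cast (by omega : i < n)
    field_simp
    ring
  have h4 : hh n = hh (n - 1) + 1 / (n : ℝ) := by
    obtain ⟨d, rfl⟩ : ∃ d, n = d + 1 := ⟨n - 1, by omega⟩
    rw [hh_succ]; simp
  rw [h3, h1, h2, h4]; ring

def Z3 (a b c : ℕ) : ℝ≥0∞ := ∑' (k : ℕ) (n : ℕ) (m : ℕ),
  if 0 < m ∧ m < n ∧ n < k then ENNReal.ofReal (1 / (k : ℝ) ^ a * (1 / (n : ℝ) ^ b) * (1 / (m : ℝ) ^ c)) else 0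
def Z2 (a b : ℕ) : ℝ≥0∞ := ∑' (k : ℕ) (n : ℕ),
  if 0 < n ∧ n < k then ENNReal.ofReal (1 / (k : ℝ) ^ a * (1 / (n : ℝ) ^ b)) else 0
def SB (q : ℕ) : ℝ≥0∞ := ∑' (k : ℕ) (n : ℕ) (m : ℕ),
  if 0 < m ∧ m < n ∧ n < k then ENNReal.ofReal (1 / (k : ℝ) ^ q * (1 / (n : ℝ) ^ 2) * (1 / ((k : ℝ) - m))) else 0
def SA (q : ℕ) : ℝ≥0∞ := ∑' (k : ℕ) (n : ℕ) (m : ℕ),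
  if 0 < m ∧ m < n ∧ n < k then ENNReal.ofReal (1 / (m : ℝ) ^ q * (1 / (n : ℝ) ^ 2) * (1 / ((k : ℝ) - m) - 1 / (k : ℝ))) else 0

lemma geo (x y : ℝ) (hxy : x < y) (hx : 0 < x) (p : ℕ) :
    ∑ a ∈ Finset.Icc 2 (p + 2), 1 / y ^ a * (1 / x ^ (p + 3 - a)) + 1 / y ^ (p + 2) * (1 / (y - x))
     = 1 / x ^ (p + 2) * (1 / (y - x) - 1 / y) := by
  have hy : 0 < y := hx.trans hxy
  have hd : 0 < y - x := by linarith
  induction p with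
  | zero => simp; field_simp; ring
  | succ p ih =>
    rw [show p + 1 + 2 = (p + 2) + 1 by ring, Finset.sum_Icc_succ_top (by omega)]
    have : ∑ a ∈ Finset.Icc 2 (p + 2), 1 / y ^ a * (1 / x ^ (p + 1 + 3 - a)) =
       (∑ a ∈ Finset.Icc 2 (p + 2), 1 / y ^ a * (1 / x ^ (p + 3 - a))) * (1 / x) := by
      rw [Finset.sum_mul]
      apply Finset.sum_congr rfl
      intro a ha
      simp at ha
      rw [show p + 1 + 3 - a = (p + 3 - a) + 1 by omega, pow_succ]
      field_simp
    rw [this, eq_sub_of_add_eq ih, show p + 1 + 3 - (p + 2 + 1) = 1 by omega]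
    field_simp
    ring

lemma L1 (p : ℕ) : ∑ a ∈ Finset.Icc 2 (p + 2), Z3 a 2 (p + 3 - a) + SB (p + 2) = SA (p + 2) := by
  unfold Z3 SB SA
  rw [← Summable.tsum_finsetSum (fun _ _ => ENNReal.summable), ← ENNReal.tsum_add]
  apply tsum_congr; intro k
  rw [← Summable.tsum_finsetSum (fun _ _ => ENNReal.summable), ← ENNReal.tsum_add]
  apply tsum_congr; intro n
  rw [← Summable.tsum_finsetSum (fun _ _ => ENNReal.summable), ← ENNReal.tsum_add]
  apply tsum_congr; intro m
  by_cases h : 0 < m ∧ m < n ∧ n < k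
  · simp only [if_pos h]
    obtain ⟨h0, h1, h2⟩ := h
    have hx : (0 : ℝ) < m := by exact_mod_cast h0
    have hxy : (m : ℝ) < k := by exact_mod_cast h1.trans h2
    have hd : (0 : ℝ) < k - m := by linarith
    rw [← ENNReal.ofReal_sum_of_nonneg (fun _ _ => by positivity), ← ENNReal.ofReal_add
      (Finset.sum_nonneg (fun _ _ => by positivity)) (by positivity)]
    congr 1
    have := geo m k hxy hx p
    have e : ∑ a ∈ Finset.Icc 2 (p + 2), 1 / (k : ℝ) ^ a * (1 / (n : ℝ) ^ 2) * (1 / (m : ℝ) ^ (p + 3 - a))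
      = (1 / (n : ℝ) ^ 2) * ∑ a ∈ Finset.Icc 2 (p + 2), 1 / (k : ℝ) ^ a * (1 / (m : ℝ) ^ (p + 3 - a)) := by
      rw [Finset.mul_sum]
      exact Finset.sum_congr rfl (fun _ _ => by ring)
    rw [e, eq_sub_of_add_eq this]
    ring
  · simp [if_neg h]

lemma swap13 (F : ℕ → ℕ → ℕ → ℝ≥0∞) : ∑' (k : ℕ) (n : ℕ) (m : ℕ), F k n m = ∑' (m : ℕ) (n : ℕ) (k : ℕ), F k n m := by
  calc ∑' (k : ℕ) (n : ℕ) (m : ℕ), F k n m = ∑' (k : ℕ) (m : ℕ) (n : ℕ), F k n m :=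
        tsum_congr (fun k => ENNReal.tsum_comm)
    _ = ∑' (m : ℕ) (k : ℕ) (n : ℕ), F k n m := ENNReal.tsum_comm
    _ = _ := tsum_congr (fun k => ENNReal.tsum_comm)

lemma SA_eq (q : ℕ) : SA q = ∑' (m : ℕ) (n : ℕ), if 0 < m ∧ m < n then
    ENNReal.ofReal (1 / (m : ℝ) ^ q * (1 / (n : ℝ) ^ 2 * (hh n - hh (n - m)))) else 0 := by
  unfold SA
  rw [swap13]
  apply tsum_congr; intro m
  apply tsum_congr; intro n
  by_cases h : 0 < m ∧ m < n
  · rw [if_pos h, ← mul_assoc, ENNReal.ofReal_mul (by positivity), ← tele n m h.2.le, ← ENNReal.tsum_mul_left]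
    apply tsum_congr; intro k
    by_cases h' : n < k
    · rw [if_pos ⟨h.1, h.2, h'⟩, if_pos h', ENNReal.ofReal_mul (by positivity)]
    · rw [if_neg (fun H => h' H.2.2), if_neg h', mul_zero]
  · rw [if_neg h]
    apply ENNReal.tsum_eq_zero.2
    intro k
    rw [if_neg (fun H => h ⟨H.1, H.2.1⟩)]

lemma Z3_eq (q : ℕ) : Z3 2 q 1 = ∑' (m : ℕ) (n : ℕ), if 0 < m ∧ m < n then
    ENNReal.ofReal (1 / (m : ℝ) ^ q * (1 / (n : ℝ) ^ 2 * hh (m - 1))) else 0 := by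
  unfold Z3
  rw [ENNReal.tsum_comm]
  apply tsum_congr; intro m
  apply tsum_congr; intro n
  by_cases h : 0 < m ∧ m < n
  · rw [if_pos h, ← mul_assoc, ENNReal.ofReal_mul (by positivity), ← sum_inv m,
      ← tsum_Ico m (fun j => 1 / (j : ℝ)) (fun _ _ _ => by positivity), ← ENNReal.tsum_mul_left]
    apply tsum_congr; intro j
    by_cases h' : 0 < j ∧ j < m
    · rw [if_pos ⟨h'.1, h'.2, h.2⟩, if_pos h', ENNReal.ofReal_mul (by positivity), pow_one,
        mul_comm (1 / (m : ℝ) ^ q)]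
    · rw [if_neg (fun H => h' ⟨H.1, H.2.1⟩), if_neg h', mul_zero]
  · rw [if_neg h]
    apply ENNReal.tsum_eq_zero.2
    intro k
    rw [if_neg (fun H => h ⟨H.1.trans H.2.1, H.2.2⟩)]

lemma SB_eq (q : ℕ) : SB q = ∑' (m : ℕ) (n : ℕ), if 0 < n ∧ n < m then
    ENNReal.ofReal (1 / (m : ℝ) ^ q * (1 / (n : ℝ) ^ 2 * (hh (m - 1) - hh (m - n)))) else 0 := by
  unfold SB
  apply tsum_congr; intro m
  apply tsum_congr; intro n
  by_cases h : 0 < n ∧ n < m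
  · rw [if_pos h, ← mul_assoc, ENNReal.ofReal_mul (by positivity), ← sum_inv_sub m n h.1 h.2.le,
      ← tsum_Ico n (fun j => 1 / ((m : ℝ) - j)), ← ENNReal.tsum_mul_left]
    · apply tsum_congr; intro j
      by_cases h' : 0 < j ∧ j < n
      · rw [if_pos ⟨h'.1, h'.2, h.2⟩, if_pos h', ENNReal.ofReal_mul (by positivity)]
      · rw [if_neg (fun H => h' ⟨H.1, H.2.1⟩), if_neg h', mul_zero]
    · intro j _ hj
      have : (j : ℝ) ≤ m := by exact_mod_cast (hj.trans h.2).le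
      exact one_div_nonneg.2 (by linarith)
  · rw [if_neg h]
    apply ENNReal.tsum_eq_zero.2
    intro k
    rw [if_neg (fun H => h ⟨H.1.trans H.2.1, H.2.2⟩)]

lemma core (m : ℕ) (hm : 0 < m) :
    ∑' n : ℕ, (if m < n then ENNReal.ofReal (∑ i ∈ Finset.Ico 1 m, 1 / ((n : ℝ) * i * (n - i))) else 0)
    = ∑' n : ℕ, if 0 < n ∧ n < m then ENNReal.ofReal (1 / (n : ℝ) ^ 2 * (hh m - hh (m - n))) else 0 := by
  rw [tsum_Ico m (fun n => 1 / (n : ℝ) ^ 2 * (hh m - hh (m - n)))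
    (fun j _ _ => mul_nonneg (by positivity) (sub_nonneg.2 (hh_mono (by omega)))),
    ENNReal.ofReal_sum_of_nonneg
    (fun j _ => mul_nonneg (by positivity) (sub_nonneg.2 (hh_mono (by omega))))]
  have : ∀ i ∈ Finset.Ico 1 m, ENNReal.ofReal (1 / (i : ℝ) ^ 2 * (hh m - hh (m - i))) =
     ∑' n : ℕ, if m < n then ENNReal.ofReal (1 / ((n : ℝ) * i * (n - i))) else 0 := by
    intro i hi
    simp at hi
    rw [ENNReal.ofReal_mul (by positivity), ← tele m i hi.2.le, ← ENNReal.tsum_mul_left]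
    apply tsum_congr; intro n
    by_cases h : m < n
    · rw [if_pos h, if_pos h, ← ENNReal.ofReal_mul (by positivity)]
      congr 1
      have h1 : (0 : ℝ) < i := by exact_mod_cast (by omega : 0 < i)
      have h5 : (0 : ℝ) < n - i := by
        rw [sub_pos]; exact_mod_cast (by omega : i < n)
      have h6 : (0 : ℝ) < n := by linarith
      field_simp
      ring
    · simp [h]
  rw [Finset.sum_congr rfl this, ← Summable.tsum_finsetSum (fun _ _ => ENNReal.summable)]
  apply tsum_congr; intro n
  by_cases h : m < n
  · simp only [if_pos h]
    rw [ENNReal.ofReal_sum_of_nonneg]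
    intro i hi
    simp at hi
    have h5 : (0 : ℝ) < n - i := by
      rw [sub_pos]; exact_mod_cast (by omega : i < n)
    positivity
  · simp [h]

lemma ite_add_ite_z (P : Prop) [Decidable P] (x y : ℝ≥0∞) :
    (if P then x else 0) + (if P then y else 0) = if P then x + y else 0 := by
  split_ifs <;> simp

lemma L2 (q : ℕ) : SA q + Z3 2 q 1 = Z2 3 q + (Z2 (q + 1) 2 + SB q) := by
  have hB : Z2 (q + 1) 2 + SB q = ∑' (m : ℕ) (n : ℕ), if 0 < n ∧ n < m then
    ENNReal.ofReal (1 / (m : ℝ) ^ q * (1 / (n : ℝ) ^ 2 * (hh m - hh (m - n)))) else 0 := by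
    rw [SB_eq]
    unfold Z2
    rw [← ENNReal.tsum_add]
    apply tsum_congr; intro m
    rw [← ENNReal.tsum_add]
    apply tsum_congr; intro n
    rw [ite_add_ite_z]
    by_cases h : 0 < n ∧ n < m
    · rw [if_pos h, if_pos h, ← ENNReal.ofReal_add (by positivity)]
      · congr 1
        obtain ⟨d, rfl⟩ : ∃ d, m = d + 1 := ⟨m - 1, by omega⟩
        rw [hh_succ, pow_succ]
        push_cast
        field_simp
        ring
      · have := sub_nonneg.2 (hh_mono (show m - n ≤ m - 1 by omega))
        positivity
    · simp [if_neg h]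
  have hZ : Z2 3 q = ∑' (m : ℕ) (n : ℕ), if 0 < m ∧ m < n then
    ENNReal.ofReal (1 / (m : ℝ) ^ q * (1 / (n : ℝ) ^ 3)) else 0 := by
    unfold Z2
    rw [ENNReal.tsum_comm]
    apply tsum_congr; intro m
    apply tsum_congr; intro n
    rw [mul_comm]
  rw [hB, hZ, SA_eq, Z3_eq, ← ENNReal.tsum_add, ← ENNReal.tsum_add]
  apply tsum_congr; intro m
  rcases Nat.eq_zero_or_pos m with rfl | hm
  · simp
  have e : (∑' n : ℕ, if 0 < n ∧ n < m then
      ENNReal.ofReal (1 / (m : ℝ) ^ q * (1 / (n : ℝ) ^ 2 * (hh m - hh (m - n)))) else 0) =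
      ENNReal.ofReal (1 / (m : ℝ) ^ q) * 
       ∑' n : ℕ, if 0 < n ∧ n < m then ENNReal.ofReal (1 / (n : ℝ) ^ 2 * (hh m - hh (m - n))) else 0 := by
    rw [← ENNReal.tsum_mul_left]
    apply tsum_congr; intro n
    rw [mul_ite, mul_zero, ENNReal.ofReal_mul (by positivity)]
  rw [e, ← core m hm, ← ENNReal.tsum_mul_left, ← ENNReal.tsum_add, ← ENNReal.tsum_add]
  apply tsum_congr; intro n
  by_cases h : m < n
  · simp only [hm, h, and_self, if_true]
    have h1 := sub_nonneg.2 (hh_mono (show n - m ≤ n by omega))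
    have h2 := hh_nonneg (m - 1)
    have h3 : 0 ≤ ∑ i ∈ Finset.Ico 1 m, 1 / ((n : ℝ) * i * (n - i)) := by
      apply Finset.sum_nonneg
      intro i hi
      simp at hi
      have h5 : (0 : ℝ) < n - i := by
        rw [sub_pos]; exact_mod_cast (by omega : i < n)
      positivity
    rw [← ENNReal.ofReal_mul (by positivity), ← ENNReal.ofReal_add (by positivity) (by positivity),
      ← ENNReal.ofReal_add (by positivity) (by positivity), ← mul_add, ← mul_add, ← mul_add, fin_id m n hm h]
    congr 2
    have hn : (n : ℝ) ≠ 0 := by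
      have : n ≠ 0 := by omega
      exact_mod_cast this
    rw [mul_add, Finset.mul_sum]
    congr 1
    · field_simp
    · apply Finset.sum_congr rfl
      intro i _
      rw [mul_assoc, ← div_div, ← div_div, div_div _ _ (i * ((n : ℝ) - i))]
      field_simp
  · simp [h]

/-! finiteness -/
def rr (k : ℕ) : ℝ≥0∞ := ENNReal.ofReal (1 / (k : ℝ) ^ (3 / 2 : ℝ))

lemma rr_fin : ∑' k, rr k ≠ ∞ := by
  unfold rr
  rw [← ENNReal.ofReal_tsum_of_nonneg (fun _ => by positivity)
    (Real.summable_one_div_nat_rpow.2 (by norm_num))]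
  exact ENNReal.ofReal_ne_top

lemma RR_fin : ∑' (k : ℕ) (n : ℕ) (m : ℕ), rr k * rr n * rr m ≠ ∞ := by
  simp_rw [ENNReal.tsum_mul_left, ENNReal.tsum_mul_right, ENNReal.tsum_mul_left, ENNReal.tsum_mul_right]
  exact ENNReal.mul_ne_top (ENNReal.mul_ne_top rr_fin rr_fin) rr_fin

lemma sq_le_aux (n b : ℕ) (hn : 0 < n) (hb : 2 ≤ b) : 1 / (n : ℝ) ^ b ≤ 1 / (n : ℝ) ^ (3 / 2 : ℝ) := by
  have h1 : (1 : ℝ) ≤ n := by exact_mod_cast hn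
  have hb' : (2 : ℝ) ≤ b := by exact_mod_cast hb
  rw [← Real.rpow_natCast]
  apply one_div_le_one_div_of_le (by positivity)
  exact Real.rpow_le_rpow_of_exponent_le h1 (by linarith)

lemma pair_le (k m a c : ℕ) (hm : 0 < m) (h : m < k) (ha : 2 ≤ a) (hc : 1 ≤ c) :
    1 / (k : ℝ) ^ a * (1 / (m : ℝ) ^ c) ≤ 1 / (k : ℝ) ^ (3 / 2 : ℝ) * (1 / (m : ℝ) ^ (3 / 2 : ℝ)) := by
  have h1 : (1 : ℝ) ≤ m := by exact_mod_cast hm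
  have h2 : (m : ℝ) ≤ k := by exact_mod_cast h.le
  have h3 : (1 : ℝ) ≤ k := h1.trans h2
  have hk0 : (0 : ℝ) < k := by linarith
  have hm0 : (0 : ℝ) < m := by linarith
  have ek : (k : ℝ) ^ (2 : ℕ) = (k : ℝ) ^ (3 / 2 : ℝ) * (k : ℝ) ^ (1 / 2 : ℝ) := by
    rw [← Real.rpow_add hk0, ← Real.rpow_natCast]; norm_num
  have em : (m : ℝ) ^ (3 / 2 : ℝ) = (m : ℝ) ^ (1 : ℕ) * (m : ℝ) ^ (1 / 2 : ℝ) := by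
    rw [← Real.rpow_natCast, ← Real.rpow_add hm0]; norm_num
  rw [one_div_mul_one_div, one_div_mul_one_div]
  apply one_div_le_one_div_of_le (by positivity)
  calc (k : ℝ) ^ (3 / 2 : ℝ) * (m : ℝ) ^ (3 / 2 : ℝ)
      = (k : ℝ) ^ (3 / 2 : ℝ) * ((m : ℝ) ^ (1 : ℕ) * (m : ℝ) ^ (1 / 2 : ℝ)) := by rw [em]
    _ ≤ (k : ℝ) ^ (3 / 2 : ℝ) * ((m : ℝ) ^ (1 : ℕ) * (k : ℝ) ^ (1 / 2 : ℝ)) := by gcongr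
    _ = (k : ℝ) ^ (2 : ℕ) * (m : ℝ) ^ (1 : ℕ) := by rw [ek]; ring
    _ ≤ (k : ℝ) ^ a * (m : ℝ) ^ c := by gcongr

lemma trip_le (k n m a b c : ℕ) (hm : 0 < m) (h : m < k) (hn : 0 < n) (ha : 2 ≤ a) (hb : 2 ≤ b) (hc : 1 ≤ c) :
    ENNReal.ofReal (1 / (k : ℝ) ^ a * (1 / (n : ℝ) ^ b) * (1 / (m : ℝ) ^ c)) ≤ rr k * rr n * rr m := by
  unfold rr
  rw [← ENNReal.ofReal_mul (by positivity), ← ENNReal.ofReal_mul (by positivity)]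
  apply ENNReal.ofReal_le_ofReal
  rw [mul_right_comm, mul_right_comm _ (1 / (n : ℝ) ^ (3 / 2 : ℝ))]
  exact mul_le_mul (pair_le k m a c hm h ha hc) (sq_le_aux n b hn hb) (by positivity) (by positivity)

lemma Z3_fin (a b c : ℕ) (ha : 2 ≤ a) (hb : 2 ≤ b) (hc : 1 ≤ c) : Z3 a b c ≠ ∞ := by
  refine ne_top_of_le_ne_top RR_fin ?_
  refine ENNReal.tsum_le_tsum fun k => ENNReal.tsum_le_tsum fun n => ENNReal.tsum_le_tsum fun m => ?_
  split_ifs with h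
  · exact trip_le k n m a b c h.1 (h.2.1.trans h.2.2) (h.1.trans h.2.1) ha hb hc
  · exact zero_le

lemma Z2_fin (a b : ℕ) (ha : 2 ≤ a) (hb : 2 ≤ b) : Z2 a b ≠ ∞ := by
  have : ∑' (k : ℕ) (n : ℕ), rr k * rr n ≠ ∞ := by
    simp_rw [ENNReal.tsum_mul_left, ENNReal.tsum_mul_right]
    exact ENNReal.mul_ne_top rr_fin rr_fin
  refine ne_top_of_le_ne_top this ?_
  refine ENNReal.tsum_le_tsum fun k => ENNReal.tsum_le_tsum fun n => ?_
  split_ifs with h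
  · unfold rr
    rw [← ENNReal.ofReal_mul (by positivity)]
    apply ENNReal.ofReal_le_ofReal
    exact mul_le_mul (sq_le_aux k a (h.1.trans h.2) ha) (sq_le_aux n b h.1 hb) (by positivity) (by positivity)
  · exact zero_le

lemma SB_fin (q : ℕ) (hq : 2 ≤ q) : SB q ≠ ∞ := by
  refine ne_top_of_le_ne_top RR_fin ?_
  rw [SB_eq]
  refine ENNReal.tsum_le_tsum fun k => ENNReal.tsum_le_tsum fun n => ?_
  split_ifs with h
  · calc ENNReal.ofReal (1 / (k : ℝ) ^ q * (1 / (n : ℝ) ^ 2 * (hh (k - 1) - hh (k - n))))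
        ≤ ENNReal.ofReal (1 / (k : ℝ) ^ q * (1 / (n : ℝ) ^ 2) * hh (k - 1)) := by
          apply ENNReal.ofReal_le_ofReal
          rw [mul_assoc]
          have := hh_nonneg (k - n)
          gcongr
          linarith
      _ = ∑' j : ℕ, if 0 < j ∧ j < k then ENNReal.ofReal (1 / (k : ℝ) ^ q * (1 / (n : ℝ) ^ 2) * (1 / (j : ℝ) ^ 1)) else 0 := by
          rw [ENNReal.ofReal_mul (by positivity), ← sum_inv k,
            ← tsum_Ico k (fun j => 1 / (j : ℝ)) (fun _ _ _ => by positivity), ← ENNReal.tsum_mul_left]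
          apply tsum_congr; intro j
          rw [mul_ite, mul_zero, pow_one, ← ENNReal.ofReal_mul (by positivity)]
      _ ≤ _ := by
          refine ENNReal.tsum_le_tsum fun m => ?_
          split_ifs with h'
          · exact trip_le k n m q 2 1 h'.1 h'.2 h.1 hq le_rfl le_rfl
          · exact zero_le
  · exact zero_le

lemma mzv_toReal {d : ℕ} (s : Fin d → ℕ) : mzv s = (∑' k : Fin d → ℕ,
    (Set.indicator {k : Fin d → ℕ | StrictAnti k ∧ ∀ i, 0 < k i}
      (fun k => ENNReal.ofReal (∏ i, (1 : ℝ) / (k i : ℝ) ^ s i)) k)).toReal := by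
  rw [← tsum_subtype {k : Fin d → ℕ | StrictAnti k ∧ ∀ i, 0 < k i}
    (fun k => ENNReal.ofReal (∏ i, (1 : ℝ) / (k i : ℝ) ^ s i)),
    ENNReal.tsum_toReal_eq (fun _ => ENNReal.ofReal_ne_top)]
  unfold mzv
  apply tsum_congr
  intro k
  rw [ENNReal.toReal_ofReal]
  positivity

def e3 : ℕ × ℕ × ℕ ≃ (Fin 3 → ℕ) where
  toFun p := ![p.1, p.2.1, p.2.2]
  invFun f := (f 0, f 1, f 2)
  left_inv p := by simp
  right_inv f := by ext i; fin_cases i <;> rfl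

def e2 : ℕ × ℕ ≃ (Fin 2 → ℕ) where
  toFun p := ![p.1, p.2]
  invFun f := (f 0, f 1)
  left_inv p := by simp
  right_inv f := by ext i; fin_cases i <;> rfl

lemma mzv3 (a b c : ℕ) : mzv ![a, b, c] = (Z3 a b c).toReal := by
  rw [mzv_toReal, ← e3.tsum_eq]
  unfold Z3
  rw [ENNReal.tsum_prod']
  congr 1
  apply tsum_congr; intro k
  rw [ENNReal.tsum_prod']
  apply tsum_congr; intro n
  apply tsum_congr; intro m
  rw [Set.indicator_apply]
  have : e3 (k, n, m) ∈ {k : Fin 3 → ℕ | StrictAnti k ∧ ∀ i, 0 < k i} ↔ 0 < m ∧ m < n ∧ n < k := by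
    simp only [e3, Equiv.coe_fn_mk, Set.mem_ofPred_eq, Fin.strictAnti_iff_succ_lt, Fin.forall_fin_succ]
    simp
    omega
  simp only [this]
  congr 2
  simp [e3, Fin.prod_univ_three]
  ring

lemma mzv2 (a b : ℕ) : mzv ![a, b] = (Z2 a b).toReal := by
  rw [mzv_toReal, ← e2.tsum_eq]
  unfold Z2
  rw [ENNReal.tsum_prod']
  congr 1
  apply tsum_congr; intro k
  apply tsum_congr; intro n
  rw [Set.indicator_apply]
  have : e2 (k, n) ∈ {k : Fin 2 → ℕ | StrictAnti k ∧ ∀ i, 0 < k i} ↔ 0 < n ∧ n < k := by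
    simp only [e2, Equiv.coe_fn_mk, Set.mem_ofPred_eq, Fin.strictAnti_iff_succ_lt, Fin.forall_fin_succ]
    simp
    omega
  simp only [this]
  congr 2
  simp [e2, Fin.prod_univ_two]
  ring

end

theorem sum_a2b (u : ℕ) (hu : 3 ≤ u) (q : ℕ) (hq : q = u - 1) :
    (∑ a ∈ Finset.Icc 2 (u - 1), mzv ![a, 2, u - a])
    = mzv ![u, 2] + mzv ![3, q] - mzv ![2, q, 1] := by
  obtain ⟨p, rfl⟩ : ∃ p, u = p + 3 := ⟨u - 3, by omega⟩
  obtain rfl : q = p + 2 := by omega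
  rw [show p + 3 - 1 = p + 2 by omega]
  simp only [mzv3, mzv2]
  have hT : ∀ a ∈ Finset.Icc 2 (p + 2), Z3 a 2 (p + 3 - a) ≠ ⊤ := by
    intro a ha
    simp at ha
    exact Z3_fin _ _ _ (by omega) le_rfl (by omega)
  have hTs := ENNReal.sum_ne_top.2 hT
  have h1 := L1 p
  have h2 := L2 (p + 2)
  have f1 := Z3_fin 2 (p + 2) 1 le_rfl (by omega) le_rfl
  have f2 := Z2_fin 3 (p + 2) (by omega) (by omega)
  have f3 := Z2_fin (p + 3) 2 (by omega) (by omega)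
  have f4 := SB_fin (p + 2) (by omega)
  rw [← h1] at h2
  have h3 := congrArg ENNReal.toReal h2
  rw [ENNReal.toReal_add (ENNReal.add_ne_top.2 ⟨hTs, f4⟩) f1, ENNReal.toReal_add hTs f4,
    ENNReal.toReal_add f2 (ENNReal.add_ne_top.2 ⟨f3, f4⟩), ENNReal.toReal_add f3 f4,
    ENNReal.toReal_sum hT] at h3
  linarith
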